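/- Let C be a locally presentable category and S a small set of objects of C. Then S generates C under colimits if and only if S is a detecting set, i.e. every morphism f : X → Y of C such that composition with f induces a bijection Hom(Z, X) → Hom(Z, Y) for every Z ∈ S is an isomorphism. -/

import Mathlib

open CategoryTheory CategoryTheory.Limits

universe w v u

namespace Paper

/-- A full subcategory (given by a set of objects) is closed under isomorphisms. -/
def IsoClosed {C : Type*} [Category C] (P : Set C) : Prop :=
  ∀ ⦃X Y : C⦄, X ∈ P → Nonempty (X ≅ Y) → Y ∈ P

/-- A set of objects is closed under all colimits of shapes `J : Type w` that exist in `C`: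
whenever a diagram valued in `P` admits a colimit cocone, its point belongs to `P`. -/
def ColimitClosed {C : Type u} [Category.{v} C] (P : Set C) : Prop :=
  ∀ (J : Type w) (_ : SmallCategory J) (F : J ⥤ C) (c : Cocone F),
    Nonempty (IsColimit c) → (∀ j : J, F.obj j ∈ P) → c.pt ∈ P

/-- A set of objects is closed under all limits of shapes `J : Type w` that exist in `C`. -/
def LimitClosed {C : Type u} [Category.{v} C] (P : Set C) : Prop :=
  ∀ (J : Type w) (_ : SmallCategory J) (F : J ⥤ C) (c : Cone F),
    Nonempty (IsLimit c) → (∀ j : J, F.obj j ∈ P) → c.pt ∈ P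

/-- `S` generates `C` under colimits: the only set of objects containing `S` which is
closed under isomorphisms and under all colimits that exist in `C` is all of `C`. -/
def GeneratesUnderColimits {C : Type u} [Category.{v} C] (S : Set C) : Prop :=
  ∀ P : Set C, S ⊆ P → IsoClosed P → ColimitClosed.{w} P → ∀ X : C, X ∈ P

/-- The smallest set of objects containing `S` which is closed under isomorphisms and
under all colimits (of shapes in `Type w`) that exist in `C`. -/
def colimitClosure {C : Type u} [Category.{v} C] (S : Set C) : Set C :=
  ⋂₀ {P : Set C | S ⊆ P ∧ IsoClosed P ∧ ColimitClosed.{w} P}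

/-- A category `J` is `κ`-filtered if every diagram indexed by a small category with
fewer than `κ` arrows admits a cocone. -/
def IsCardinalFiltered (J : Type w) [SmallCategory J] (κ : Cardinal.{w}) : Prop :=
  ∀ (K : Type w) (_ : SmallCategory K) (F : K ⥤ J),
    Cardinal.mk (Arrow K) < κ → Nonempty (Cocone F)

/-- A set of objects is closed under colimits of `κ`-filtered shapes that exist in `C`. -/
def FilteredColimitClosed {C : Type u} [Category.{v} C] (κ : Cardinal.{w}) (P : Set C) :
    Prop :=
  ∀ (J : Type w) (_ : SmallCategory J), IsCardinalFiltered J κ →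
    ∀ (F : J ⥤ C) (c : Cocone F),
      Nonempty (IsColimit c) → (∀ j : J, F.obj j ∈ P) → c.pt ∈ P

/-- An object `X` of a large category `C` is `κ`-presentable if its Hom-functor
`Hom(X, -) : C ⥤ Type u` preserves colimits of `κ`-filtered (small) shapes. -/
def IsPresentableObj {C : Type (u + 1)} [Category.{u} C] (κ : Cardinal.{u}) (X : C) : Prop :=
  ∀ (J : Type u) (_ : SmallCategory J), IsCardinalFiltered J κ →
    PreservesColimitsOfShape J (coyoneda.obj (Opposite.op X))

/-- A large category `C` is locally presentable if it has all small colimits and there is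
a regular cardinal `κ` such that `C` has, up to isomorphism, only a small set of
`κ`-presentable objects and every object of `C` is a `κ`-filtered colimit of
`κ`-presentable objects. -/
def LocallyPresentable (C : Type (u + 1)) [Category.{u} C] : Prop :=
  HasColimits C ∧
    ∃ κ : Cardinal.{u}, κ.IsRegular ∧
      (∃ S : Set C, Small.{u} S ∧
        ∀ X : C, IsPresentableObj κ X → ∃ Y ∈ S, Nonempty (X ≅ Y)) ∧
      ∀ X : C, ∃ (J : Type u) (_ : SmallCategory J) (F : J ⥤ C) (c : Cocone F),
        IsCardinalFiltered J κ ∧ (∀ j : J, IsPresentableObj κ (F.obj j)) ∧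
        c.pt = X ∧ Nonempty (IsColimit c)

end Paper

/-!
Fix `κ` such that all objects of `S` are `κ`-presentable, and let `Q` be the closure of `S` under
`κ`-small colimits. For each object `X`, the objects of `Q` over `X` form a small `κ`-filtered
category, so that `Hom(Z, -)` with `Z ∈ S` commutes with the colimit of its canonical diagram.
The comparison map from this colimit to `X` is surjective on `Hom(Z, -)` because `Z ∈ Q`, and
injective because two maps `Z ⟶ G` with `G ∈ Q` over `X` that agree in `X` already agree in their
coequalizer, which is again an object of `Q` over `X`. As `S` is detecting, `X` is this colimit.

Conversely, the objects `Z` such that `Hom(Z, f)` is bijective are closed under colimits.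
-/

namespace Paper

section Translation

variable {C : Type u} [Category.{v} C]

lemma isoClosed_setOf_iff (P : ObjectProperty C) :
    IsoClosed {X | P X} ↔ P.IsClosedUnderIsomorphisms :=
  ⟨fun h ↦ ⟨fun e hX ↦ h hX ⟨e⟩⟩, fun _ _ _ hX ⟨e⟩ ↦ P.prop_of_iso e hX⟩

lemma colimitClosed_setOf_iff (P : ObjectProperty C) :
    ColimitClosed.{w} {X | P X} ↔
      ∀ (J : Type w) [SmallCategory J], P.IsClosedUnderColimitsOfShape J :=
  ⟨fun h J _ ↦ ⟨fun X ⟨p⟩ ↦ h J _ p.diag (.mk X p.ι) ⟨p.isColimit⟩ p.prop_diag_obj⟩,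
    fun h J _ _ _ ⟨hc⟩ hF ↦
      have := h J
      P.prop_of_isColimit hc hF⟩

lemma isDetecting_iff_isIso_of_bijective (P : ObjectProperty C) :
    P.IsDetecting ↔ ∀ {X Y : C} (f : X ⟶ Y),
      (∀ Z, P Z → Function.Bijective fun g : Z ⟶ X ↦ g ≫ f) → IsIso f := by
  simp only [ObjectProperty.IsDetecting, Function.bijective_iff_existsUnique]

end Translation

section Presentability

lemma isCardinalFiltered_iff (J : Type w) [SmallCategory J] (κ : Cardinal.{w})
    [Fact κ.IsRegular] :
    IsCardinalFiltered J κ ↔ CategoryTheory.IsCardinalFiltered J κ :=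
  ⟨fun h ↦ ⟨fun F hA ↦ h _ _ F ((hasCardinalLT_iff_cardinal_mk_lt _ _).1 hA)⟩,
    fun h _ _ F hA ↦ h.nonempty_cocone F ((hasCardinalLT_iff_cardinal_mk_lt _ _).2 hA)⟩

variable {C : Type (u + 1)} [Category.{u} C]

lemma isPresentableObj_iff_isCardinalPresentable (κ : Cardinal.{u}) [Fact κ.IsRegular]
    (X : C) :
    IsPresentableObj κ X ↔ IsCardinalPresentable X κ :=
  ⟨fun h ↦ ⟨fun J _ hJ ↦ h J _ ((isCardinalFiltered_iff J κ).2 hJ)⟩,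
    fun h J _ hJ ↦
      have := (isCardinalFiltered_iff J κ).1 hJ
      h.preservesColimitOfShape J⟩

lemma LocallyPresentable.isPresentable (hC : LocallyPresentable C) (X : C) :
    IsPresentable.{u} X := by
  obtain ⟨_, κ, hκ, -, hgen⟩ := hC
  have : Fact κ.IsRegular := ⟨hκ⟩
  have hκgen : (isCardinalPresentable C κ).IsCardinalFilteredGenerator κ := by
    refine ⟨le_rfl, fun X ↦ ?_⟩
    obtain ⟨J, _, F, c, hJ, hF, rfl, ⟨hc⟩⟩ := hgen X
    exact ⟨J, inferInstance, (isCardinalFiltered_iff J κ).1 hJ,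
      ⟨{  diag := F
          ι := c.ι
          isColimit := hc
          prop_diag_obj j := (isPresentableObj_iff_isCardinalPresentable κ _).1 (hF j) }⟩⟩
  exact hκgen.presentable X

end Presentability

section CanonicalDiagram

variable {C : Type u} [Category.{v} C]

lemma exists_common_hom_of_preservesColimit_coyoneda {J : Type*} [Category* J] [IsFiltered J]
    {F : J ⥤ C} {c : Cocone F} (hc : IsColimit c) {G : C}
    [PreservesColimit F (coyoneda.obj (Opposite.op G))] (g₁ g₂ : G ⟶ c.pt) :
    ∃ (j : J) (φ₁ φ₂ : G ⟶ F.obj j), φ₁ ≫ c.ι.app j = g₁ ∧ φ₂ ≫ c.ι.app j = g₂ := by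
  obtain ⟨j₁, φ₁, rfl⟩ := exists_hom_of_preservesColimit_coyoneda hc g₁
  obtain ⟨j₂, φ₂, rfl⟩ := exists_hom_of_preservesColimit_coyoneda hc g₂
  exact ⟨IsFiltered.max j₁ j₂, φ₁ ≫ F.map (IsFiltered.leftToMax j₁ j₂),
    φ₂ ≫ F.map (IsFiltered.rightToMax j₁ j₂), by rw [Category.assoc, c.w],
    by rw [Category.assoc, c.w]⟩

variable {Q : ObjectProperty C} {X : C}

lemma comp_ι_eq_of_comp_hom_eq [HasCoequalizers C]
    [Q.IsClosedUnderColimitsOfShape WalkingParallelPair]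
    (c : Cocone (CostructuredArrow.proj Q.ι X ⋙ Q.ι)) {G : C} (hG : Q G)
    {j : CostructuredArrow Q.ι X} {φ₁ φ₂ : G ⟶ (CostructuredArrow.proj Q.ι X ⋙ Q.ι).obj j}
    (h : φ₁ ≫ j.hom = φ₂ ≫ j.hom) : φ₁ ≫ c.ι.app j = φ₂ ≫ c.ι.app j := by
  have hQ : Q (coequalizer φ₁ φ₂) := by
    apply Q.prop_colimit
    rintro (_ | _)
    exacts [hG, j.left.property]
  let K : Q.FullSubcategory := ⟨coequalizer φ₁ φ₂, hQ⟩
  let toCoequalizer : j ⟶ .mk (S := Q.ι) (Y := K) (coequalizer.desc j.hom h) :=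
    CostructuredArrow.homMk (ObjectProperty.homMk (coequalizer.π φ₁ φ₂)) (coequalizer.π_desc _ _)
  rw [← c.w toCoequalizer]
  exact coequalizer.condition_assoc _ _ _

lemma bijective_comp_of_isColimit [HasCoequalizers C]
    [Q.IsClosedUnderColimitsOfShape WalkingParallelPair] [IsFiltered (CostructuredArrow Q.ι X)]
    {c : Cocone (CostructuredArrow.proj Q.ι X ⋙ Q.ι)} (hc : IsColimit c)
    {π : c.pt ⟶ X} (hπ : ∀ j, c.ι.app j ≫ π = j.hom) {G : C} (hG : Q G)
    [PreservesColimit (CostructuredArrow.proj Q.ι X ⋙ Q.ι) (coyoneda.obj (Opposite.op G))] :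
    Function.Bijective fun g : G ⟶ c.pt ↦ g ≫ π := by
  let G' : Q.FullSubcategory := ⟨G, hG⟩
  refine ⟨fun g₁ g₂ h ↦ ?_, fun g ↦ ⟨c.ι.app (.mk (S := Q.ι) (Y := G') g), hπ _⟩⟩
  obtain ⟨j, φ₁, φ₂, rfl, rfl⟩ := exists_common_hom_of_preservesColimit_coyoneda hc g₁ g₂
  refine comp_ι_eq_of_comp_hom_eq c hG ?_
  rw [← hπ, ← Category.assoc, ← Category.assoc]
  exact h

end CanonicalDiagram

section Density

variable {C : Type u} [Category.{v} C]

lemma exists_le_isCardinalPresentable (P : ObjectProperty C) [ObjectProperty.Small.{w} P]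
    (hP : ∀ X, P X → IsPresentable.{w} X) :
    ∃ (κ : Cardinal.{w}) (_ : Fact κ.IsRegular), P ≤ isCardinalPresentable C κ := by
  choose κ hκ hX using fun X : Subtype P ↦ (hP X.1 X.2).exists_cardinal
  obtain ⟨κ', hκ', hlt⟩ := HasCardinalLT.exists_regular_cardinal_forall.{w}
    fun X : Subtype P ↦ (κ X).ord.ToType
  have : Fact κ'.IsRegular := ⟨hκ'⟩
  refine ⟨κ', this, fun X h ↦ ?_⟩
  have hle : κ ⟨X, h⟩ ≤ κ' := by
    simpa [hasCardinalLT_iff_cardinal_mk_lt] using (hlt ⟨X, h⟩).le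
  have : IsCardinalPresentable X (κ ⟨X, h⟩) := hX ⟨X, h⟩
  exact isCardinalPresentable_of_le X hle

lemma isClosedUnderCoequalizers_colimitsCardinalClosure (P : ObjectProperty C)
    (κ : Cardinal.{w}) [Fact κ.IsRegular] :
    (P.colimitsCardinalClosure κ).IsClosedUnderColimitsOfShape WalkingParallelPair := by
  refine P.isClosedUnderColimitsOfShape_colimitsCardinalClosure κ _
    (.of_le ?_ (Cardinal.IsRegular.aleph0_le Fact.out))
  rw [hasCardinalLT_aleph0_iff]
  infer_instance

lemma isDense_ι_of_isDetecting [HasColimitsOfSize.{w, w} C] [LocallySmall.{w} C]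
    {P Q : ObjectProperty C} [ObjectProperty.EssentiallySmall.{w} Q]
    [Q.IsClosedUnderColimitsOfShape WalkingParallelPair]
    {κ : Cardinal.{w}} [Fact κ.IsRegular]
    [∀ X, CategoryTheory.IsCardinalFiltered (CostructuredArrow Q.ι X) κ]
    (hP : P.IsDetecting) (hPκ : P ≤ isCardinalPresentable C κ) (hPQ : P ≤ Q) :
    Q.ι.IsDense where
  isDenseAt X := by
    have : HasColimitsOfShape (CostructuredArrow Q.ι X) C :=
      hasColimitsOfShape_of_essentiallySmall.{w} _ C
    have := isFiltered_of_isCardinalFiltered (CostructuredArrow Q.ι X) κ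
    let s := (Functor.LeftExtension.mk (𝟭 C) Q.ι.rightUnitor.inv).coconeAt X
    have hs (j : CostructuredArrow Q.ι X) : colimit.ι _ j ≫ colimit.desc _ s = j.hom :=
      (colimit.ι_desc s j).trans (Category.id_comp j.hom)
    have : IsIso (colimit.desc _ s) := by
      refine (isDetecting_iff_isIso_of_bijective P).1 hP _ fun G hG ↦ ?_
      have : IsCardinalPresentable G κ := hPκ G hG
      have := preservesColimitsOfShape_of_isCardinalPresentable_of_essentiallySmall G κ
        (CostructuredArrow Q.ι X)
      exact bijective_comp_of_isColimit (colimit.isColimit _) hs (hPQ G hG)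
    exact ⟨(colimit.isColimit _).ofIsoColimit (Cocone.ext (asIso (colimit.desc _ s)))⟩

lemma eq_top_of_isDense_ι [LocallySmall.{w} C] {P Q : ObjectProperty C}
    [ObjectProperty.EssentiallySmall.{w} Q] [Q.ι.IsDense] (hQP : Q ≤ P)
    (hP : ∀ (J : Type w) [SmallCategory J], P.IsClosedUnderColimitsOfShape J) : P = ⊤ := by
  refine top_unique fun X _ ↦ ?_
  have := hP (SmallModel.{w} (CostructuredArrow Q.ι X))
  have := ObjectProperty.IsClosedUnderColimitsOfShape.of_equivalence (P := P)
    (equivSmallModel.{w} (CostructuredArrow Q.ι X)).symm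
  exact P.prop_of_isColimit (Q.ι.denseAt X) fun j ↦ hQP _ j.left.property

end Density

section Generation

variable {C : Type u} [Category.{v} C] {S : Set C}

lemma GeneratesUnderColimits.isDetecting (hS : GeneratesUnderColimits.{w} S) :
    ObjectProperty.IsDetecting (· ∈ S) := by
  refine (isDetecting_iff_isIso_of_bijective _).2 fun f hf ↦ isIso_of_yoneda_map_bijective f ?_
  let P := (MorphismProperty.single f).isColocal
  have hP : ∀ X, P X := hS {X | P X}
    (fun Z hZ ↦ (MorphismProperty.isColocal_single_iff_bijective f Z).2 (hf Z hZ))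
    ((isoClosed_setOf_iff P).2 inferInstance)
    ((colimitClosed_setOf_iff P).2 fun _ _ ↦ inferInstance)
  exact fun T ↦ (MorphismProperty.isColocal_single_iff_bijective f T).1 (hP T)

lemma generatesUnderColimits_of_isDetecting [HasColimitsOfSize.{w, w} C] [LocallySmall.{w} C]
    [Small.{w} S] (hpres : ∀ X ∈ S, IsPresentable.{w} X)
    (hS : ObjectProperty.IsDetecting (· ∈ S)) : GeneratesUnderColimits.{w} S := by
  intro P hSP hiso hcolim X
  let R : ObjectProperty C := (· ∈ S)
  let P' : ObjectProperty C := (· ∈ P)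
  have : ObjectProperty.Small.{w} R := ‹Small.{w} S›
  have := (isoClosed_setOf_iff P').1 hiso
  have hP' := (colimitClosed_setOf_iff P').1 hcolim
  obtain ⟨κ, _, hκ⟩ := exists_le_isCardinalPresentable R hpres
  have := isClosedUnderCoequalizers_colimitsCardinalClosure R κ
  have := isDense_ι_of_isDetecting hS hκ (R.le_colimitsCardinalClosure κ)
  have htop : P' = ⊤ := eq_top_of_isDense_ι
    (R.colimitsCardinalClosure_le κ (fun J _ _ ↦ hP' J) hSP) hP'
  exact htop.ge X trivial

end Generation

theorem gen_crit_general {C : Type u} [Category.{v} C] [HasColimitsOfSize.{w, w} C]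
    [LocallySmall.{w} C] (S : Set C) [Small.{w} S] (hS : ∀ X ∈ S, IsPresentable.{w} X) :
    GeneratesUnderColimits.{w} S ↔
      ∀ {X Y : C} (f : X ⟶ Y),
        (∀ Z ∈ S, Function.Bijective fun g : Z ⟶ X ↦ g ≫ f) → IsIso f :=
  Iff.trans ⟨fun h ↦ h.isDetecting, generatesUnderColimits_of_isDetecting hS⟩
    (isDetecting_iff_isIso_of_bijective (· ∈ S))

/-!
STATEMENT 7 (`Gen_Crit`): In a locally presentable category `C`, a small set of
objects `S` generates `C` under colimits if and only if `S` is a detecting set.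
-/

theorem gen_crit {C : Type (u + 1)} [Category.{u} C] (hC : LocallyPresentable C)
    (S : Set C) (hS : Small.{u} S) :
    GeneratesUnderColimits.{u} S ↔
      ∀ {X Y : C} (f : X ⟶ Y),
        (∀ Z ∈ S, Function.Bijective fun g : Z ⟶ X => g ≫ f) → IsIso f := by
  have := hC.1
  exact gen_crit_general S fun X _ ↦ hC.isPresentable X

end Paper
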